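/- Let L, T, τ > 0 and let f : ℝ → ℝ be continuously differentiable. Let q = (q₀, q₁, q₂) be a C¹ solution, L-periodic in x, of the system ∂_t q₀ + ∂_x f(q₀) + ∂_x q₂ = 0, ∂_t q₁ + τ ∂_x q₁ = −q₂, τ ∂_t q₂ + ∂_x q₀ = q₁, and let q̄ = (q̄₀, q̄₁, q̄₂) be a C¹ triple, L-periodic in x, satisfying the same system except that the second equation reads ∂_t q̄₁ + τ ∂_x q̄₁ = −q̄₂ + τ R for some continuous R. Then the relative energy η(q, q̄)(t) = ∫₀^L (½ (q₀−q̄₀)² + ½ (q₁−q̄₁)² + (τ/2)(q₂−q̄₂)²) dx is differentiable in t and satisfies d/dt η(q, q̄)(t) = −∫₀^L [ (∂_x q̄₀) (f(q₀) − f(q̄₀) − f′(q̄₀)(q₀ − q̄₀)) + τ (q₁ − q̄₁) R ] dx for all t ∈ [0,T]. -/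

import Mathlib

open MeasureTheory

/-- Partial derivative with respect to the first (time) variable. -/
noncomputable def pdt (u : ℝ → ℝ → ℝ) : ℝ → ℝ → ℝ :=
  fun t x => deriv (fun s => u s x) t

/-- Partial derivative with respect to the second (space) variable. -/
noncomputable def pdx (u : ℝ → ℝ → ℝ) : ℝ → ℝ → ℝ :=
  fun t x => deriv (fun y => u t y) x

/-!
For *arbitrary* `C¹` triples the relative energy density `e` satisfies a pointwise balance law
`∂_t e + ∂_x Φ = g`, where `g` pairs `q - q̄` with the difference of the residuals of the three
equations and subtracts the relative flux term `∂_x q̄₀ f(q₀ | q̄₀)`. The linear part of the law is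
the skew-symmetry of the system in the energy inner product. The nonlinear part is an exact
`x`-derivative: `(q₀ - q̄₀) ∂_x (f(q₀) - f(q̄₀)) - ∂_x q̄₀ f(q₀ | q̄₀)` is the derivative of
`(q₀ - q̄₀) f(q₀) - ∫_{q̄₀}^{q₀} f`. Integrating over a period removes `∂_x Φ`.
-/

section PartialDerivatives

variable {u : ℝ → ℝ → ℝ}

theorem hasDerivAt_pdt (hu : ContDiff ℝ 1 (Function.uncurry u)) (t x : ℝ) :
    HasDerivAt (fun s => u s x) (pdt u t x) t :=
  ((hu.comp (contDiff_prodMk_left x)).differentiable one_ne_zero t).hasDerivAt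

theorem hasDerivAt_pdx (hu : ContDiff ℝ 1 (Function.uncurry u)) (t x : ℝ) :
    HasDerivAt (fun y => u t y) (pdx u t x) x :=
  ((hu.comp (contDiff_prodMk_right t)).differentiable one_ne_zero x).hasDerivAt

theorem continuous_pdx (hu : ContDiff ℝ 1 (Function.uncurry u)) (t : ℝ) :
    Continuous (pdx u t) :=
  (hu.comp (contDiff_prodMk_right t)).continuous_deriv le_rfl

theorem continuous_uncurry_pdt (hu : ContDiff ℝ 1 (Function.uncurry u)) :
    Continuous (Function.uncurry (pdt u)) := by
  have pdt_eq_fderiv (p : ℝ × ℝ) :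
      Function.uncurry (pdt u) p = fderiv ℝ (Function.uncurry u) p (1, 0) := by
    have hfderiv := (hu.differentiable one_ne_zero p).hasFDerivAt
    exact (hfderiv.comp_hasDerivAt p.1
      ((hasDerivAt_id p.1).prodMk (hasDerivAt_const p.1 p.2))).deriv
  exact ((hu.continuous_fderiv one_ne_zero).clm_apply continuous_const).congr
    fun p => (pdt_eq_fderiv p).symm

theorem pdx_comp {f : ℝ → ℝ} (hf : Differentiable ℝ f)
    (hu : ContDiff ℝ 1 (Function.uncurry u)) (t x : ℝ) :
    pdx (fun s y => f (u s y)) t x = deriv f (u t x) * pdx u t x :=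
  ((hf (u t x)).hasDerivAt.comp x (hasDerivAt_pdx hu t x)).deriv

theorem hasDerivAt_intervalIntegral_of_contDiff (hu : ContDiff ℝ 1 (Function.uncurry u))
    (a b t : ℝ) :
    HasDerivAt (fun s => ∫ x in a..b, u s x) (∫ x in a..b, pdt u t x) t := by
  have pdt_cont := continuous_uncurry_pdt hu
  have slice_cont (s : ℝ) : Continuous (u s) := hu.continuous.comp (Continuous.prodMk_right s)
  obtain ⟨C, hC⟩ := ((isCompact_closedBall t 1).prod
    (isCompact_uIcc (a := a) (b := b))).exists_bound_of_continuousOn pdt_cont.continuousOn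
  exact (intervalIntegral.hasDerivAt_integral_of_dominated_loc_of_deriv_le
    (bound := fun _ => C) (Metric.closedBall_mem_nhds t one_pos)
    (.of_forall fun s => (slice_cont s).aestronglyMeasurable)
    ((slice_cont t).intervalIntegrable a b)
    (pdt_cont.comp (Continuous.prodMk_right t)).aestronglyMeasurable
    (.of_forall fun x hx s hs => hC (s, x) ⟨hs, Set.uIoc_subset_uIcc hx⟩)
    intervalIntegrable_const
    (.of_forall fun x _ s _ => hasDerivAt_pdt hu s x)).2

theorem integral_pdx_eq_zero_of_periodic (hu : ContDiff ℝ 1 (Function.uncurry u)) {L t : ℝ}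
    (hper : Function.Periodic (u t) L) (a : ℝ) :
    ∫ x in a..(a + L), pdx u t x = 0 := by
  rw [intervalIntegral.integral_eq_sub_of_hasDerivAt (fun x _ => hasDerivAt_pdx hu t x)
    ((continuous_pdx hu t).intervalIntegrable _ _), hper a, sub_self]

theorem hasDerivAt_integral_of_balance_law {e Φ : ℝ → ℝ → ℝ} {g : ℝ → ℝ} {L t : ℝ}
    (he : ContDiff ℝ 1 (Function.uncurry e)) (hΦ : ContDiff ℝ 1 (Function.uncurry Φ))
    (hper : Function.Periodic (Φ t) L) (hbalance : ∀ x, pdt e t x + pdx Φ t x = g x) (a : ℝ) :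
    HasDerivAt (fun s => ∫ x in a..(a + L), e s x) (∫ x in a..(a + L), g x) t := by
  have pdt_cont : Continuous (pdt e t) :=
    (continuous_uncurry_pdt he).comp (Continuous.prodMk_right t)
  refine (hasDerivAt_intervalIntegral_of_contDiff he a (a + L) t).congr_deriv ?_
  calc ∫ x in a..(a + L), pdt e t x
      = (∫ x in a..(a + L), pdt e t x) + ∫ x in a..(a + L), pdx Φ t x := by
        rw [integral_pdx_eq_zero_of_periodic hΦ hper, add_zero]
    _ = ∫ x in a..(a + L), (pdt e t x + pdx Φ t x) :=
        (intervalIntegral.integral_add (pdt_cont.intervalIntegrable _ _)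
          ((continuous_pdx hΦ t).intervalIntegrable _ _)).symm
    _ = ∫ x in a..(a + L), g x := by simp only [hbalance]

end PartialDerivatives

section VariableEndpoints

variable {f : ℝ → ℝ}

theorem integral_eq_primitive_sub_primitive (hf : Continuous f) (a b : ℝ) :
    ∫ r in a..b, f r = (∫ r in (0 : ℝ)..b, f r) - ∫ r in (0 : ℝ)..a, f r :=
  (intervalIntegral.integral_interval_sub_left (hf.intervalIntegrable _ _)
    (hf.intervalIntegrable _ _)).symm

theorem hasDerivAt_integral_endpoints (hf : Continuous f) {v w : ℝ → ℝ} {v' w' x : ℝ}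
    (hv : HasDerivAt v v' x) (hw : HasDerivAt w w' x) :
    HasDerivAt (fun y => ∫ r in (w y)..(v y), f r) (f (v x) * v' - f (w x) * w') x := by
  have primitive (z : ℝ) : HasDerivAt (fun z => ∫ r in (0 : ℝ)..z, f r) (f z) z :=
    (hf.integral_hasStrictDerivAt 0 z).hasDerivAt
  rw [funext fun y => integral_eq_primitive_sub_primitive hf (w y) (v y)]
  exact ((primitive (v x)).comp x hv).sub ((primitive (w x)).comp x hw)

theorem contDiff_integral_endpoints {E : Type*} [NormedAddCommGroup E] [NormedSpace ℝ E]
    (hf : Continuous f) {v w : E → ℝ} (hv : ContDiff ℝ 1 v) (hw : ContDiff ℝ 1 w) :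
    ContDiff ℝ 1 (fun y => ∫ r in (w y)..(v y), f r) := by
  have primitive : ContDiff ℝ 1 (fun z => ∫ r in (0 : ℝ)..z, f r) := by
    have hderiv (z : ℝ) := (hf.integral_hasStrictDerivAt 0 z).hasDerivAt
    exact contDiff_one_iff_deriv.2 ⟨fun z => (hderiv z).differentiableAt,
      hf.congr fun z => (hderiv z).deriv.symm⟩
  rw [funext fun y => integral_eq_primitive_sub_primitive hf (w y) (v y)]
  exact (primitive.comp hv).sub (primitive.comp hw)

end VariableEndpoints

/-- The relative flux `f(v | w)`: the error at `v` of the linearization of `f` at `w`. -/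
noncomputable def relativeFlux (f : ℝ → ℝ) (v w : ℝ) : ℝ :=
  f v - f w - deriv f w * (v - w)

/-- Residual of the first equation, `∂_t q₀ + ∂_x f(q₀) + ∂_x q₂ = 0`, of the hyperbolic
BBM system. -/
noncomputable def bbmResidual₀ (f : ℝ → ℝ) (q₀ q₂ : ℝ → ℝ → ℝ) (t x : ℝ) : ℝ :=
  pdt q₀ t x + pdx (fun s y => f (q₀ s y)) t x + pdx q₂ t x

/-- Residual of the second equation, `∂_t q₁ + τ ∂_x q₁ = -q₂`, of the hyperbolic BBM system. -/
noncomputable def bbmResidual₁ (τ : ℝ) (q₁ q₂ : ℝ → ℝ → ℝ) (t x : ℝ) : ℝ :=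
  pdt q₁ t x + τ * pdx q₁ t x + q₂ t x

/-- Residual of the third equation, `τ ∂_t q₂ + ∂_x q₀ = q₁`, of the hyperbolic BBM system. -/
noncomputable def bbmResidual₂ (τ : ℝ) (q₀ q₁ q₂ : ℝ → ℝ → ℝ) (t x : ℝ) : ℝ :=
  τ * pdt q₂ t x + pdx q₀ t x - q₁ t x

/-- Integrand of the relative energy `η(q, q̄)`; `qbᵢ` stands for `q̄ᵢ`. -/
noncomputable def bbmRelativeEnergyDensity (τ : ℝ) (q₀ q₁ q₂ qb₀ qb₁ qb₂ : ℝ → ℝ → ℝ)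
    (t x : ℝ) : ℝ :=
  (q₀ t x - qb₀ t x) ^ 2 / 2 + (q₁ t x - qb₁ t x) ^ 2 / 2 + τ / 2 * (q₂ t x - qb₂ t x) ^ 2

/-- Flux `Φ` of the relative energy density in its balance law `bbm_relative_energy_balance`. -/
noncomputable def bbmRelativeEnergyFlux (τ : ℝ) (f : ℝ → ℝ) (q₀ q₁ q₂ qb₀ qb₁ qb₂ : ℝ → ℝ → ℝ)
    (t x : ℝ) : ℝ :=
  (q₀ t x - qb₀ t x) * (q₂ t x - qb₂ t x) + τ / 2 * (q₁ t x - qb₁ t x) ^ 2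
    + ((q₀ t x - qb₀ t x) * f (q₀ t x) - ∫ r in (qb₀ t x)..(q₀ t x), f r)

/-- Source of the relative energy density in its balance law `bbm_relative_energy_balance`:
the pairing of `q - q̄` with the difference of the residuals, minus `∂_x q̄₀ f(q₀ | q̄₀)`. -/
noncomputable def bbmRelativeEnergySource (τ : ℝ) (f : ℝ → ℝ)
    (q₀ q₁ q₂ qb₀ qb₁ qb₂ : ℝ → ℝ → ℝ) (t x : ℝ) : ℝ :=
  (q₀ t x - qb₀ t x) * (bbmResidual₀ f q₀ q₂ t x - bbmResidual₀ f qb₀ qb₂ t x)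
    + (q₁ t x - qb₁ t x) * (bbmResidual₁ τ q₁ q₂ t x - bbmResidual₁ τ qb₁ qb₂ t x)
    + (q₂ t x - qb₂ t x) * (bbmResidual₂ τ q₀ q₁ q₂ t x - bbmResidual₂ τ qb₀ qb₁ qb₂ t x)
    - pdx qb₀ t x * relativeFlux f (q₀ t x) (qb₀ t x)

section RelativeEnergy

variable {τ L : ℝ} {f : ℝ → ℝ} {q₀ q₁ q₂ qb₀ qb₁ qb₂ : ℝ → ℝ → ℝ}

theorem periodic_bbmRelativeEnergyFlux {t : ℝ}
    (hper₀ : Function.Periodic (q₀ t) L) (hper₁ : Function.Periodic (q₁ t) L)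
    (hper₂ : Function.Periodic (q₂ t) L) (hperb₀ : Function.Periodic (qb₀ t) L)
    (hperb₁ : Function.Periodic (qb₁ t) L) (hperb₂ : Function.Periodic (qb₂ t) L) :
    Function.Periodic (bbmRelativeEnergyFlux τ f q₀ q₁ q₂ qb₀ qb₁ qb₂ t) L := fun x => by
  simp only [bbmRelativeEnergyFlux, hper₀ x, hper₁ x, hper₂ x, hperb₀ x, hperb₁ x, hperb₂ x]

theorem bbmRelativeEnergySource_of_solves {t x r : ℝ}
    (h₀ : pdt q₀ t x + pdx (fun s y => f (q₀ s y)) t x + pdx q₂ t x = 0)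
    (h₁ : pdt q₁ t x + τ * pdx q₁ t x = -q₂ t x)
    (h₂ : τ * pdt q₂ t x + pdx q₀ t x = q₁ t x)
    (hb₀ : pdt qb₀ t x + pdx (fun s y => f (qb₀ s y)) t x + pdx qb₂ t x = 0)
    (hb₁ : pdt qb₁ t x + τ * pdx qb₁ t x = -qb₂ t x + τ * r)
    (hb₂ : τ * pdt qb₂ t x + pdx qb₀ t x = qb₁ t x) :
    bbmRelativeEnergySource τ f q₀ q₁ q₂ qb₀ qb₁ qb₂ t x =
      -(pdx qb₀ t x
          * (f (q₀ t x) - f (qb₀ t x) - deriv f (qb₀ t x) * (q₀ t x - qb₀ t x))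
        + τ * (q₁ t x - qb₁ t x) * r) := by
  simp only [bbmRelativeEnergySource, bbmResidual₀, bbmResidual₁, bbmResidual₂, relativeFlux]
  linear_combination (q₀ t x - qb₀ t x) * (h₀ - hb₀) + (q₁ t x - qb₁ t x) * (h₁ - hb₁)
    + (q₂ t x - qb₂ t x) * (h₂ - hb₂)

variable (hq₀ : ContDiff ℝ 1 (Function.uncurry q₀)) (hq₁ : ContDiff ℝ 1 (Function.uncurry q₁))
    (hq₂ : ContDiff ℝ 1 (Function.uncurry q₂)) (hqb₀ : ContDiff ℝ 1 (Function.uncurry qb₀))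
    (hqb₁ : ContDiff ℝ 1 (Function.uncurry qb₁)) (hqb₂ : ContDiff ℝ 1 (Function.uncurry qb₂))

include hq₀ hq₁ hq₂ hqb₀ hqb₁ hqb₂

theorem contDiff_bbmRelativeEnergyDensity :
    ContDiff ℝ 1 (Function.uncurry (bbmRelativeEnergyDensity τ q₀ q₁ q₂ qb₀ qb₁ qb₂)) :=
  ((((hq₀.sub hqb₀).pow 2).div_const 2).add (((hq₁.sub hqb₁).pow 2).div_const 2)).add
    (contDiff_const.mul ((hq₂.sub hqb₂).pow 2))

theorem pdt_bbmRelativeEnergyDensity (t x : ℝ) :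
    pdt (bbmRelativeEnergyDensity τ q₀ q₁ q₂ qb₀ qb₁ qb₂) t x =
      (q₀ t x - qb₀ t x) * (pdt q₀ t x - pdt qb₀ t x)
        + (q₁ t x - qb₁ t x) * (pdt q₁ t x - pdt qb₁ t x)
        + τ * (q₂ t x - qb₂ t x) * (pdt q₂ t x - pdt qb₂ t x) := by
  have dw₀ := (hasDerivAt_pdt hq₀ t x).fun_sub (hasDerivAt_pdt hqb₀ t x)
  have dw₁ := (hasDerivAt_pdt hq₁ t x).fun_sub (hasDerivAt_pdt hqb₁ t x)
  have dw₂ := (hasDerivAt_pdt hq₂ t x).fun_sub (hasDerivAt_pdt hqb₂ t x)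
  have de := (((dw₀.fun_pow 2).div_const 2).add ((dw₁.fun_pow 2).div_const 2)).add
    ((dw₂.fun_pow 2).const_mul (τ / 2))
  refine de.deriv.trans ?_
  ring

variable (hf : ContDiff ℝ 1 f)

include hf

theorem contDiff_bbmRelativeEnergyFlux :
    ContDiff ℝ 1 (Function.uncurry (bbmRelativeEnergyFlux τ f q₀ q₁ q₂ qb₀ qb₁ qb₂)) :=
  (((hq₀.sub hqb₀).mul (hq₂.sub hqb₂)).add (contDiff_const.mul ((hq₁.sub hqb₁).pow 2))).add
    (((hq₀.sub hqb₀).mul (hf.comp hq₀)).sub (contDiff_integral_endpoints hf.continuous hq₀ hqb₀))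

theorem pdx_bbmRelativeEnergyFlux (t x : ℝ) :
    pdx (bbmRelativeEnergyFlux τ f q₀ q₁ q₂ qb₀ qb₁ qb₂) t x =
      (q₀ t x - qb₀ t x) * (pdx q₂ t x - pdx qb₂ t x)
        + (q₂ t x - qb₂ t x) * (pdx q₀ t x - pdx qb₀ t x)
        + τ * (q₁ t x - qb₁ t x) * (pdx q₁ t x - pdx qb₁ t x)
        + (q₀ t x - qb₀ t x) * (deriv f (q₀ t x) * pdx q₀ t x)
        - pdx qb₀ t x * (f (q₀ t x) - f (qb₀ t x)) := by
  have dq₀ := hasDerivAt_pdx hq₀ t x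
  have dqb₀ := hasDerivAt_pdx hqb₀ t x
  have dw₀ := dq₀.fun_sub dqb₀
  have dw₁ := (hasDerivAt_pdx hq₁ t x).fun_sub (hasDerivAt_pdx hqb₁ t x)
  have dw₂ := (hasDerivAt_pdx hq₂ t x).fun_sub (hasDerivAt_pdx hqb₂ t x)
  have df := (hf.differentiable one_ne_zero (q₀ t x)).hasDerivAt.comp x dq₀
  have dΦ := ((dw₀.mul dw₂).add ((dw₁.fun_pow 2).const_mul (τ / 2))).add
    ((dw₀.mul df).sub (hasDerivAt_integral_endpoints hf.continuous dq₀ dqb₀))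
  refine dΦ.deriv.trans ?_
  simp only [Function.comp_apply]
  ring

theorem bbm_relative_energy_balance (t x : ℝ) :
    pdt (bbmRelativeEnergyDensity τ q₀ q₁ q₂ qb₀ qb₁ qb₂) t x
        + pdx (bbmRelativeEnergyFlux τ f q₀ q₁ q₂ qb₀ qb₁ qb₂) t x =
      bbmRelativeEnergySource τ f q₀ q₁ q₂ qb₀ qb₁ qb₂ t x := by
  have hf' : Differentiable ℝ f := hf.differentiable one_ne_zero
  rw [pdt_bbmRelativeEnergyDensity hq₀ hq₁ hq₂ hqb₀ hqb₁ hqb₂,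
    pdx_bbmRelativeEnergyFlux hq₀ hq₁ hq₂ hqb₀ hqb₁ hqb₂ hf]
  simp only [bbmRelativeEnergySource, bbmResidual₀, bbmResidual₁, bbmResidual₂, relativeFlux,
    pdx_comp hf' hq₀, pdx_comp hf' hqb₀]
  ring

theorem bbm_relative_energy_identity_general {t : ℝ}
    (hper₀ : Function.Periodic (q₀ t) L) (hper₁ : Function.Periodic (q₁ t) L)
    (hper₂ : Function.Periodic (q₂ t) L) (hperb₀ : Function.Periodic (qb₀ t) L)
    (hperb₁ : Function.Periodic (qb₁ t) L) (hperb₂ : Function.Periodic (qb₂ t) L) (a : ℝ) :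
    HasDerivAt
      (fun s => ∫ x in a..(a + L), bbmRelativeEnergyDensity τ q₀ q₁ q₂ qb₀ qb₁ qb₂ s x)
      (∫ x in a..(a + L), bbmRelativeEnergySource τ f q₀ q₁ q₂ qb₀ qb₁ qb₂ t x) t :=
  hasDerivAt_integral_of_balance_law
    (contDiff_bbmRelativeEnergyDensity hq₀ hq₁ hq₂ hqb₀ hqb₁ hqb₂)
    (contDiff_bbmRelativeEnergyFlux hq₀ hq₁ hq₂ hqb₀ hqb₁ hqb₂ hf)
    (periodic_bbmRelativeEnergyFlux hper₀ hper₁ hper₂ hperb₀ hperb₁ hperb₂)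
    (bbm_relative_energy_balance hq₀ hq₁ hq₂ hqb₀ hqb₁ hqb₂ hf t) a

end RelativeEnergy

/-- Relative energy identity for the hyperbolic approximation of the generalized
Benjamin–Bona–Mahony equation: if `q` solves the system and `q̄` solves the system
with a residual `τ R` in the second equation, then the relative energy satisfies
`d/dt η(q, q̄) = -∫ (∂_x q̄₀)(f(q₀) - f(q̄₀) - f'(q̄₀)(q₀ - q̄₀)) + τ (q₁ - q̄₁) R dx`. -/
theorem bbm_relative_energy_identity
    (L T τ : ℝ) (hL : 0 < L) (hT : 0 < T) (hτ : 0 < τ)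
    (f : ℝ → ℝ) (hf : ContDiff ℝ 1 f)
    (q₀ q₁ q₂ qb₀ qb₁ qb₂ R : ℝ → ℝ → ℝ)
    (hq₀ : ContDiff ℝ 1 (Function.uncurry q₀))
    (hq₁ : ContDiff ℝ 1 (Function.uncurry q₁))
    (hq₂ : ContDiff ℝ 1 (Function.uncurry q₂))
    (hqb₀ : ContDiff ℝ 1 (Function.uncurry qb₀))
    (hqb₁ : ContDiff ℝ 1 (Function.uncurry qb₁))
    (hqb₂ : ContDiff ℝ 1 (Function.uncurry qb₂))
    (hR : Continuous (Function.uncurry R))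
    (hper₀ : ∀ t, Function.Periodic (q₀ t) L)
    (hper₁ : ∀ t, Function.Periodic (q₁ t) L)
    (hper₂ : ∀ t, Function.Periodic (q₂ t) L)
    (hperb₀ : ∀ t, Function.Periodic (qb₀ t) L)
    (hperb₁ : ∀ t, Function.Periodic (qb₁ t) L)
    (hperb₂ : ∀ t, Function.Periodic (qb₂ t) L)
    (heq₀ : ∀ t ∈ Set.Icc (0:ℝ) T, ∀ x : ℝ,
      pdt q₀ t x + pdx (fun s y => f (q₀ s y)) t x + pdx q₂ t x = 0)
    (heq₁ : ∀ t ∈ Set.Icc (0:ℝ) T, ∀ x : ℝ,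
      pdt q₁ t x + τ * pdx q₁ t x = - q₂ t x)
    (heq₂ : ∀ t ∈ Set.Icc (0:ℝ) T, ∀ x : ℝ,
      τ * pdt q₂ t x + pdx q₀ t x = q₁ t x)
    (heqb₀ : ∀ t ∈ Set.Icc (0:ℝ) T, ∀ x : ℝ,
      pdt qb₀ t x + pdx (fun s y => f (qb₀ s y)) t x + pdx qb₂ t x = 0)
    (heqb₁ : ∀ t ∈ Set.Icc (0:ℝ) T, ∀ x : ℝ,
      pdt qb₁ t x + τ * pdx qb₁ t x = - qb₂ t x + τ * R t x)
    (heqb₂ : ∀ t ∈ Set.Icc (0:ℝ) T, ∀ x : ℝ,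
      τ * pdt qb₂ t x + pdx qb₀ t x = qb₁ t x) :
    ∀ t ∈ Set.Icc (0:ℝ) T,
      HasDerivWithinAt
        (fun s => ∫ x in (0:ℝ)..L,
          ((q₀ s x - qb₀ s x) ^ 2 / 2 + (q₁ s x - qb₁ s x) ^ 2 / 2
            + τ / 2 * (q₂ s x - qb₂ s x) ^ 2))
        (- ∫ x in (0:ℝ)..L,
          (pdx qb₀ t x
              * (f (q₀ t x) - f (qb₀ t x) - deriv f (qb₀ t x) * (q₀ t x - qb₀ t x))
            + τ * (q₁ t x - qb₁ t x) * R t x))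
        (Set.Icc (0:ℝ) T) t := by
  intro t ht
  have hη := bbm_relative_energy_identity_general (τ := τ) hq₀ hq₁ hq₂ hqb₀ hqb₁ hqb₂ hf
    (hper₀ t) (hper₁ t) (hper₂ t) (hperb₀ t) (hperb₁ t) (hperb₂ t) 0
  rw [zero_add] at hη
  rw [← intervalIntegral.integral_neg]
  exact (hη.congr_deriv <| intervalIntegral.integral_congr fun x _ =>
    bbmRelativeEnergySource_of_solves (heq₀ t ht x) (heq₁ t ht x) (heq₂ t ht x)
      (heqb₀ t ht x) (heqb₁ t ht x) (heqb₂ t ht x)).hasDerivWithinAt
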